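/- arXiv:2510.24548 — 2 statements merged into one kernel-verified Lean document; each statement's English description precedes it below -/
import Mathlib

section
/- Let χ^{μν}, χ^{μνa}, χ^{μνab} : ℝ → ℝ be smooth with χ^{μν…} = χ^{νμ…} and χ^{μνab} = χ^{μνba}; let γ^{μ}, γ^{μa}, γ^{μab}, γ^{μabc} : ℝ → ℝ be smooth and totally symmetric in their Latin indices; let Γ^ρ_{μν} : ℝ⁴ → ℝ and F^ρ_μ : ℝ⁴ → ℝ be smooth. Then the following are equivalent. (A) For every test covector field θ : ℝ⁴ → ℝ⁴: Σ_{μ,ν} ∫_ℝ [ χ^{μν} E_{μν}(σ,0) − Σ_a χ^{μνa} (∂_a E_{μν})(σ,0) + ½ Σ_{a,b} χ^{μνab} (∂_a∂_b E_{μν})(σ,0) ] dσ = Σ_μ ∫_ℝ [ γ^{μ} G_μ(σ,0) − Σ_a γ^{μa} (∂_a G_μ)(σ,0) + ½ Σ_{a,b} γ^{μab} (∂_a∂_b G_μ)(σ,0) − (1/6) Σ_{a,b,c} γ^{μabc} (∂_a∂_b∂_c G_μ)(σ,0) ] dσ, where E_{μν} := Σ_ρ Γ^ρ_{μν}θ_ρ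 − ∂_μθ_ν and G_μ := Σ_ρ F^ρ_μ θ_ρ. (B) For every σ, with Γ, F and their derivatives evaluated at (σ,0,0,0): (i) dχ^{μ0}/dσ + Σ Γ^μ_{νρ}χ^{ρν} − Σ χ^{ρνa}∂_aΓ^μ_{νρ} + ½ Σ χ^{ρνab}∂_b∂_aΓ^μ_{νρ} = Σ_ρ[ γ^{ρ}F^μ_ρ − Σ_a γ^{ρa}∂_aF^μ_ρ + ½ Σ_{a,b} γ^{ρab}∂_b∂_aF^μ_ρ − (1/6) Σ_{a,b,c} γ^{ρabc}∂_c∂_b∂_aF^μ_ρ ]; (ii) dχ^{μ0a}/dσ + χ^{μa} + Σ Γ^μ_{νρ}χ^{ρνa} − Σ (∂_bΓ^μ_{νρ})χ^{ρνba} = Σ_ρ[ γ^{ρa}F^μ_ρ − Σ_b γ^{ρab}∂_bF^μ_ρ + ½ Σ_{b,c} γ^{ρabc}∂_c∂_bF^μ_ρ ]; (iii) dχ^{μ0ab}/dσ + (χ^{μba} + χ^{μab}) + Σ Γ^μ_{νρ}χ^{ρνab} = Σ_ρ[ γ^{ρab}F^μ_ρ − Σ_c γ^{ρabc}∂_cF^μ_ρ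 ]; (iv) the total symmetrization over a,b,c of χ^{μabc} equals (1/3) Σ_ρ γ^{ρabc} F^μ_ρ. (Condition (A) is the weak form of the divergence condition ∇_μ T^{μν} = g^{νρ}F_{ρμ}J^μ for a stress-energy quadrupole T in an external electromagnetic field F with current octupole J.) -/
/-!
For a smooth compactly supported `ψ`, write `pair c0 c1 c2 c3 ψ σ` for the integrand of the pairing
of an octupole on the worldline with `ψ`. Let `D0, D1, D2, D3` be the residuals (left side minus
right side) of equations (i)–(iv). The weak divergence condition is equivalent to the statement
that, for each `ρ`, the octupole with coefficients `(D0 ρ, D1 ρ, D2 ρ, 3 * D3 ρ)` annihilates all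
test functions:

* products `Γ^ρ_{μν} θ_ρ` and `F^ρ_μ θ_ρ` are expanded by the Leibniz rule (`pair_mul`), which moves
  `Γ` and `F` into the coefficients;
* the spatial derivatives `∂_a θ_ρ` raise the order by one and symmetrize the coefficients
  (`pair_pd_space`), which is the origin of the total symmetrization in (iv);
* the derivative `∂_0 θ_ρ` is integrated by parts along the worldline (`hasDerivAt_pair`).

This gives (B) ⇒ (A) at once. Conversely, a continuous symmetric octupole annihilating all test
functions has zero coefficients (`Null.coeff_eq_zero`): multiplying the test function by a spatial
coordinate, which vanishes on the worldline, lowers the order by one (`Null.shift`). Three such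
steps isolate the top coefficients, and the fundamental lemma of the calculus of variations
(`Null.zeroth`) shows that they vanish; the lower orders follow in turn.
-/

open MeasureTheory

noncomputable section

/-- Standard basis vector `e_μ` of `ℝ⁴`. -/
def e4 (μ : Fin 4) : Fin 4 → ℝ := fun ν => if ν = μ then 1 else 0

/-- Embedding of Latin (spatial) indices `{1,2,3}` into `{0,1,2,3}`. -/
def sp (a : Fin 3) : Fin 4 := a.succ

/-- The point `(σ,0,0,0)` on the worldline. -/
def pt (σ : ℝ) : Fin 4 → ℝ := fun μ => if μ = 0 then σ else 0

/-- Partial derivative `∂_μ ψ`. -/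
def pd (μ : Fin 4) (ψ : (Fin 4 → ℝ) → ℝ) : (Fin 4 → ℝ) → ℝ :=
  fun x => fderiv ℝ ψ x (e4 μ)

/-- `E_{μν} = Σ_ρ Γ^ρ_{μν} θ_ρ − ∂_μ θ_ν`. -/
def Efield (Γ : Fin 4 → Fin 4 → Fin 4 → (Fin 4 → ℝ) → ℝ)
    (θ : (Fin 4 → ℝ) → Fin 4 → ℝ) (μ ν : Fin 4) : (Fin 4 → ℝ) → ℝ :=
  fun x => (∑ ρ : Fin 4, Γ ρ μ ν x * θ x ρ) - pd μ (fun y => θ y ν) x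

/-- `G_μ = Σ_ρ F^ρ_μ θ_ρ`. -/
def Gfield (F : Fin 4 → Fin 4 → (Fin 4 → ℝ) → ℝ)
    (θ : (Fin 4 → ℝ) → Fin 4 → ℝ) (μ : Fin 4) : (Fin 4 → ℝ) → ℝ :=
  fun x => ∑ ρ : Fin 4, F ρ μ x * θ x ρ

/-! ### Octupole pairings and partial derivatives -/

/-- The integrand at `σ` of the pairing of the octupole with coefficients `c0, …, c3` (their values
at `σ`) with a test function `ψ`. Multipoles of lower order have vanishing top coefficients. -/
def pair (c0 : ℝ) (c1 : Fin 3 → ℝ) (c2 : Fin 3 → Fin 3 → ℝ) (c3 : Fin 3 → Fin 3 → Fin 3 → ℝ)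
    (ψ : (Fin 4 → ℝ) → ℝ) (σ : ℝ) : ℝ :=
  c0 * ψ (pt σ) - ∑ a : Fin 3, c1 a * pd (sp a) ψ (pt σ)
    + (1/2) * ∑ a : Fin 3, ∑ b : Fin 3, c2 a b * pd (sp a) (pd (sp b) ψ) (pt σ)
    - (1/6) * ∑ a : Fin 3, ∑ b : Fin 3, ∑ c : Fin 3,
        c3 a b c * pd (sp a) (pd (sp b) (pd (sp c) ψ)) (pt σ)

theorem pd_smooth {ψ : (Fin 4 → ℝ) → ℝ} (h : ContDiff ℝ (⊤ : ℕ∞) ψ) (μ : Fin 4) :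
    ContDiff ℝ (⊤ : ℕ∞) (pd μ ψ) := by
  have := h.fderiv_right (m := (⊤ : ℕ∞)) (by simp)
  exact this.clm_apply contDiff_const

theorem smooth_differentiable {ψ : (Fin 4 → ℝ) → ℝ} (h : ContDiff ℝ (⊤ : ℕ∞) ψ) :
    Differentiable ℝ ψ := h.differentiable (by simp)

theorem pd_add {f g : (Fin 4 → ℝ) → ℝ} (hf : ContDiff ℝ (⊤ : ℕ∞) f)
    (hg : ContDiff ℝ (⊤ : ℕ∞) g) (μ : Fin 4) :
    pd μ (fun x => f x + g x) = fun x => pd μ f x + pd μ g x := by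
  funext x
  simp only [pd]
  rw [fderiv_fun_add (smooth_differentiable hf x) (smooth_differentiable hg x)]
  rfl

theorem pd_sub {f g : (Fin 4 → ℝ) → ℝ} (hf : ContDiff ℝ (⊤ : ℕ∞) f)
    (hg : ContDiff ℝ (⊤ : ℕ∞) g) (μ : Fin 4) :
    pd μ (fun x => f x - g x) = fun x => pd μ f x - pd μ g x := by
  funext x
  simp only [pd]
  rw [fderiv_fun_sub (smooth_differentiable hf x) (smooth_differentiable hg x)]
  rfl

theorem pd_mul {f g : (Fin 4 → ℝ) → ℝ} (hf : ContDiff ℝ (⊤ : ℕ∞) f)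
    (hg : ContDiff ℝ (⊤ : ℕ∞) g) (μ : Fin 4) :
    pd μ (fun x => f x * g x) = fun x => pd μ f x * g x + f x * pd μ g x := by
  funext x
  simp only [pd]
  rw [fderiv_fun_mul (smooth_differentiable hf x) (smooth_differentiable hg x)]
  simp
  ring

/-- Symmetry of second partial derivatives. -/
theorem pd_comm {ψ : (Fin 4 → ℝ) → ℝ} (h : ContDiff ℝ (⊤ : ℕ∞) ψ) (μ ν : Fin 4) :
    pd μ (pd ν ψ) = pd ν (pd μ ψ) := by
  funext x
  have hs : IsSymmSndFDerivAt ℝ ψ x :=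
    h.contDiffAt.isSymmSndFDerivAt (by simpa using WithTop.coe_le_coe.2 (le_top : (2 : ℕ∞) ≤ ⊤))
  have hd : DifferentiableAt ℝ (fderiv ℝ ψ) x :=
    ((h.fderiv_right (m := (⊤ : ℕ∞)) (by simp)).differentiable (by simp)) x
  have key : ∀ α β : Fin 4, pd α (pd β ψ) x = fderiv ℝ (fderiv ℝ ψ) x (e4 α) (e4 β) := by
    intro α β
    show fderiv ℝ (fun y => fderiv ℝ ψ y (e4 β)) x (e4 α) = _
    rw [fderiv_clm_apply hd (differentiableAt_const _)]
    simp
  rw [key, key]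
  exact hs _ _

theorem pd_compact {ψ : (Fin 4 → ℝ) → ℝ} (h : HasCompactSupport ψ) (μ : Fin 4) :
    HasCompactSupport (pd μ ψ) := h.fderiv_apply ℝ (e4 μ)

theorem pt_eq (σ : ℝ) : pt σ = σ • e4 0 := by
  funext i; simp [pt, e4]

theorem continuous_pt : Continuous pt := by
  have : pt = fun σ => σ • e4 0 := funext pt_eq
  rw [this]; fun_prop

theorem comp_pt_compact {ψ : (Fin 4 → ℝ) → ℝ} (h : HasCompactSupport ψ) :
    HasCompactSupport (fun σ => ψ (pt σ)) := by
  refine h.comp_isClosedEmbedding (g := pt) ?_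
  refine Topology.IsClosedEmbedding.of_continuous_injective_isClosedMap continuous_pt ?_ ?_
  · intro s t hst
    simpa [pt] using congrFun hst 0
  · have : Function.LeftInverse (fun x : Fin 4 → ℝ => x 0) pt := fun s => by simp [pt]
    exact (this.isClosedEmbedding (continuous_apply 0) continuous_pt).isClosedMap

theorem hasDerivAt_pt {ψ : (Fin 4 → ℝ) → ℝ} (h : ContDiff ℝ (⊤ : ℕ∞) ψ) (σ : ℝ) :
    HasDerivAt (fun s => ψ (pt s)) (pd 0 ψ (pt σ)) σ := by
  have h1 : HasDerivAt pt (e4 0) σ := by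
    have : pt = fun σ => σ • e4 0 := funext pt_eq
    rw [this]
    simpa using (hasDerivAt_id σ).smul_const (e4 0)
  exact (smooth_differentiable h (pt σ)).hasFDerivAt.comp_hasDerivAt σ h1

theorem integrable_term {c : ℝ → ℝ} {ψ : (Fin 4 → ℝ) → ℝ} (hc : Continuous c)
    (h : ContDiff ℝ (⊤ : ℕ∞) ψ) (hs : HasCompactSupport ψ) :
    Integrable (fun σ => c σ * ψ (pt σ)) := by
  refine Continuous.integrable_of_hasCompactSupport ?_ ?_
  · exact hc.mul (h.continuous.comp continuous_pt)
  · exact (comp_pt_compact hs).mul_left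

theorem integrable_pair {c0 : ℝ → ℝ} {c1 : Fin 3 → ℝ → ℝ} {c2 : Fin 3 → Fin 3 → ℝ → ℝ}
    {c3 : Fin 3 → Fin 3 → Fin 3 → ℝ → ℝ} (h0 : Continuous c0) (h1 : ∀ a, Continuous (c1 a))
    (h2 : ∀ a b, Continuous (c2 a b)) (h3 : ∀ a b c, Continuous (c3 a b c))
    {ψ : (Fin 4 → ℝ) → ℝ} (h : ContDiff ℝ (⊤ : ℕ∞) ψ) (hs : HasCompactSupport ψ) :
    Integrable (fun σ => pair (c0 σ) (fun a => c1 a σ) (fun a b => c2 a b σ)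
      (fun a b c => c3 a b c σ) ψ σ) := by
  unfold pair
  refine ((((integrable_term h0 h hs).sub ?_).add ?_).sub ?_)
  · exact integrable_finsetSum _ fun a _ =>
      integrable_term (h1 a) (pd_smooth h _) (pd_compact hs _)
  · refine Integrable.const_mul ?_ _
    exact integrable_finsetSum _ fun a _ => integrable_finsetSum _ fun b _ =>
      integrable_term (h2 a b) (pd_smooth (pd_smooth h _) _) (pd_compact (pd_compact hs _) _)
  · refine Integrable.const_mul ?_ _
    exact integrable_finsetSum _ fun a _ => integrable_finsetSum _ fun b _ =>
      integrable_finsetSum _ fun c _ =>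
      integrable_term (h3 a b c) (pd_smooth (pd_smooth (pd_smooth h _) _) _)
        (pd_compact (pd_compact (pd_compact hs _) _) _)

/-! ### Algebra of the pairing -/

theorem pair_sub {f g : (Fin 4 → ℝ) → ℝ} (hf : ContDiff ℝ (⊤ : ℕ∞) f)
    (hg : ContDiff ℝ (⊤ : ℕ∞) g) (c0 : ℝ) (c1 : Fin 3 → ℝ) (c2 : Fin 3 → Fin 3 → ℝ)
    (c3 : Fin 3 → Fin 3 → Fin 3 → ℝ) (σ : ℝ) :
    pair c0 c1 c2 c3 (fun x => f x - g x) σ = pair c0 c1 c2 c3 f σ - pair c0 c1 c2 c3 g σ := by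
  simp only [pair, pd_sub hf hg, pd_sub (pd_smooth hf _) (pd_smooth hg _),
    pd_sub (pd_smooth (pd_smooth hf _) _) (pd_smooth (pd_smooth hg _) _), mul_sub,
    Finset.sum_sub_distrib]
  ring

theorem pair_add {f g : (Fin 4 → ℝ) → ℝ} (hf : ContDiff ℝ (⊤ : ℕ∞) f)
    (hg : ContDiff ℝ (⊤ : ℕ∞) g) (c0 : ℝ) (c1 : Fin 3 → ℝ) (c2 : Fin 3 → Fin 3 → ℝ)
    (c3 : Fin 3 → Fin 3 → Fin 3 → ℝ) (σ : ℝ) :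
    pair c0 c1 c2 c3 (fun x => f x + g x) σ = pair c0 c1 c2 c3 f σ + pair c0 c1 c2 c3 g σ := by
  simp only [pair, pd_add hf hg, pd_add (pd_smooth hf _) (pd_smooth hg _),
    pd_add (pd_smooth (pd_smooth hf _) _) (pd_smooth (pd_smooth hg _) _), mul_add,
    Finset.sum_add_distrib]
  ring

theorem pair_sum_field {ψ : Fin 4 → (Fin 4 → ℝ) → ℝ} (h : ∀ ρ, ContDiff ℝ (⊤ : ℕ∞) (ψ ρ))
    (c0 : ℝ) (c1 : Fin 3 → ℝ) (c2 : Fin 3 → Fin 3 → ℝ)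
    (c3 : Fin 3 → Fin 3 → Fin 3 → ℝ) (σ : ℝ) :
    pair c0 c1 c2 c3 (fun x => ∑ ρ, ψ ρ x) σ = ∑ ρ, pair c0 c1 c2 c3 (ψ ρ) σ := by
  simp only [Fin.sum_univ_four]
  rw [pair_add (((h 0).add (h 1)).add (h 2)) (h 3), pair_add ((h 0).add (h 1)) (h 2),
    pair_add (h 0) (h 1)]

theorem pair_add_coeff (c0 d0 : ℝ) (c1 d1 : Fin 3 → ℝ) (c2 d2 : Fin 3 → Fin 3 → ℝ)
    (c3 d3 : Fin 3 → Fin 3 → Fin 3 → ℝ) (ψ : (Fin 4 → ℝ) → ℝ) (σ : ℝ) :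
    pair c0 c1 c2 c3 ψ σ + pair d0 d1 d2 d3 ψ σ
      = pair (c0 + d0) (fun a => c1 a + d1 a) (fun a b => c2 a b + d2 a b)
          (fun a b c => c3 a b c + d3 a b c) ψ σ := by
  simp only [pair, add_mul, Finset.sum_add_distrib]
  ring

theorem pair_sub_coeff (c0 d0 : ℝ) (c1 d1 : Fin 3 → ℝ) (c2 d2 : Fin 3 → Fin 3 → ℝ)
    (c3 d3 : Fin 3 → Fin 3 → Fin 3 → ℝ) (ψ : (Fin 4 → ℝ) → ℝ) (σ : ℝ) :
    pair c0 c1 c2 c3 ψ σ - pair d0 d1 d2 d3 ψ σ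
      = pair (c0 - d0) (fun a => c1 a - d1 a) (fun a b => c2 a b - d2 a b)
          (fun a b c => c3 a b c - d3 a b c) ψ σ := by
  simp only [pair, sub_mul, Finset.sum_sub_distrib]
  ring

theorem pair_sum_coeff (c0 : Fin 4 → ℝ) (c1 : Fin 4 → Fin 3 → ℝ)
    (c2 : Fin 4 → Fin 3 → Fin 3 → ℝ) (c3 : Fin 4 → Fin 3 → Fin 3 → Fin 3 → ℝ)
    (ψ : (Fin 4 → ℝ) → ℝ) (σ : ℝ) :
    ∑ i, pair (c0 i) (c1 i) (c2 i) (c3 i) ψ σ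
      = pair (∑ i, c0 i) (fun a => ∑ i, c1 i a) (fun a b => ∑ i, c2 i a b)
          (fun a b c => ∑ i, c3 i a b c) ψ σ := by
  simp only [Fin.sum_univ_four, pair_add_coeff]

/-- Leibniz rule: an octupole paired with `g * ψ` is another octupole, whose coefficients absorb `g`
and its derivatives, paired with `ψ`. Symmetry of the coefficients merges the mixed terms. -/
theorem pair_mul {g ψ : (Fin 4 → ℝ) → ℝ} (hg : ContDiff ℝ (⊤ : ℕ∞) g)
    (h : ContDiff ℝ (⊤ : ℕ∞) ψ) (c0 : ℝ) (c1 : Fin 3 → ℝ) (c2 : Fin 3 → Fin 3 → ℝ)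
    (c3 : Fin 3 → Fin 3 → Fin 3 → ℝ) (hc2 : ∀ a b, c2 a b = c2 b a)
    (hc3 : ∀ a b c, c3 a b c = c3 b a c) (hc3' : ∀ a b c, c3 a b c = c3 a c b) (σ : ℝ) :
    pair c0 c1 c2 c3 (fun x => g x * ψ x) σ
      = pair (pair c0 c1 c2 c3 g σ)
          (fun a => c1 a * g (pt σ) - ∑ b, c2 a b * pd (sp b) g (pt σ)
            + (1/2) * ∑ b, ∑ c, c3 a b c * pd (sp b) (pd (sp c) g) (pt σ))
          (fun a b => c2 a b * g (pt σ) - ∑ c, c3 a b c * pd (sp c) g (pt σ))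
          (fun a b c => c3 a b c * g (pt σ)) ψ σ := by
  have hg1 := fun a => pd_smooth hg a
  have hg2 := fun a b => pd_smooth (pd_smooth hg a) b
  have h1 := fun a => pd_smooth h a
  have h2 := fun a b => pd_smooth (pd_smooth h a) b
  simp only [pair, pd_mul hg h, pd_add ((hg1 _).mul h) (hg.mul (h1 _)), pd_mul (hg1 _) h,
    pd_mul hg (h1 _), pd_add (((hg2 _ _).mul h).add ((hg1 _).mul (h1 _)))
      (((hg1 _).mul (h1 _)).add (hg.mul (h2 _ _))),
    pd_add ((hg2 _ _).mul h) ((hg1 _).mul (h1 _)), pd_add ((hg1 _).mul (h1 _)) (hg.mul (h2 _ _)),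
    pd_mul (hg2 _ _) h, pd_mul (hg1 _) (h1 _), pd_mul hg (h2 _ _)]
  have e1 := hc2 1 0
  have e2 := hc2 2 0
  have e3 := hc2 2 1
  have f1 : c3 0 1 0 = c3 0 0 1 := hc3' _ _ _
  have f2 : c3 1 0 0 = c3 0 0 1 := by rw [hc3, hc3']
  have f3 : c3 0 2 0 = c3 0 0 2 := hc3' _ _ _
  have f4 : c3 2 0 0 = c3 0 0 2 := by rw [hc3, hc3']
  have f5 : c3 1 0 1 = c3 0 1 1 := hc3 _ _ _
  have f6 : c3 1 1 0 = c3 0 1 1 := by rw [hc3', hc3]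
  have f7 : c3 2 0 2 = c3 0 2 2 := hc3 _ _ _
  have f8 : c3 2 2 0 = c3 0 2 2 := by rw [hc3', hc3]
  have f9 : c3 1 2 1 = c3 1 1 2 := hc3' _ _ _
  have f10 : c3 2 1 1 = c3 1 1 2 := by rw [hc3, hc3']
  have f11 : c3 2 1 2 = c3 1 2 2 := hc3 _ _ _
  have f12 : c3 2 2 1 = c3 1 2 2 := by rw [hc3', hc3]
  have f13 : c3 0 2 1 = c3 0 1 2 := hc3' _ _ _
  have f14 : c3 1 0 2 = c3 0 1 2 := hc3 _ _ _
  have f15 : c3 1 2 0 = c3 0 1 2 := by rw [hc3', hc3]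
  have f16 : c3 2 0 1 = c3 0 1 2 := by rw [hc3, hc3']
  have f17 : c3 2 1 0 = c3 0 1 2 := by rw [hc3', f16]
  simp only [Fin.sum_univ_three, e1, e2, e3, f1, f2, f3, f4, f5, f6, f7, f8, f9, f10, f11, f12,
    f13, f14, f15, f16, f17]
  ring

/-- The sum over `i` of quadrupoles paired with `∂_i ψ` is minus an octupole paired with `ψ`. As
partial derivatives commute, only symmetrized coefficients matter. -/
theorem pair_pd_space {ψ : (Fin 4 → ℝ) → ℝ} (h : ContDiff ℝ (⊤ : ℕ∞) ψ)
    (c0 : Fin 3 → ℝ) (c1 : Fin 3 → Fin 3 → ℝ) (c2 : Fin 3 → Fin 3 → Fin 3 → ℝ) (σ : ℝ) :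
    ∑ i, pair (c0 i) (c1 i) (c2 i) (fun _ _ _ => 0) (pd (sp i) ψ) σ
      = - pair 0 c0 (fun a b => c1 b a + c1 a b)
          (fun a b c => 3 * ((1/6) * (c2 a b c + c2 a c b + c2 b a c + c2 b c a
            + c2 c a b + c2 c b a))) ψ σ := by
  have s1 := fun a b => pd_comm h a b
  have s2 := fun a b c => pd_comm (pd_smooth h c) a b
  have e1 := s1 (sp 1) (sp 0)
  have e2 := s1 (sp 2) (sp 0)
  have e3 := s1 (sp 2) (sp 1)
  have q1 := fun c => s2 (sp 1) (sp 0) c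
  have q2 := fun c => s2 (sp 2) (sp 0) c
  have q3 := fun c => s2 (sp 2) (sp 1) c
  simp only [pair, Fin.sum_univ_three, e1, e2, e3, q1, q2, q3]
  ring

/-- Product rule along the worldline; it allows `∂_0` to be integrated by parts. -/
theorem hasDerivAt_pair {c0 : ℝ → ℝ} {c1 : Fin 3 → ℝ → ℝ} {c2 : Fin 3 → Fin 3 → ℝ → ℝ}
    (h0 : Differentiable ℝ c0) (h1 : ∀ a, Differentiable ℝ (c1 a))
    (h2 : ∀ a b, Differentiable ℝ (c2 a b)) {ψ : (Fin 4 → ℝ) → ℝ}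
    (h : ContDiff ℝ (⊤ : ℕ∞) ψ) (σ : ℝ) :
    HasDerivAt (fun s => pair (c0 s) (fun a => c1 a s) (fun a b => c2 a b s) (fun _ _ _ => 0) ψ s)
      (pair (deriv c0 σ) (fun a => deriv (c1 a) σ) (fun a b => deriv (c2 a b) σ)
          (fun _ _ _ => 0) ψ σ
        + pair (c0 σ) (fun a => c1 a σ) (fun a b => c2 a b σ) (fun _ _ _ => 0) (pd 0 ψ) σ) σ := by
  have k0 := (h0 σ).hasDerivAt.mul (hasDerivAt_pt h σ)
  have k1 := fun a => (h1 a σ).hasDerivAt.mul (hasDerivAt_pt (pd_smooth h (sp a)) σ)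
  have k2 := fun a b => (h2 a b σ).hasDerivAt.mul
    (hasDerivAt_pt (pd_smooth (pd_smooth h (sp b)) (sp a)) σ)
  have K := (k0.sub (HasDerivAt.fun_sum fun a (_ : a ∈ Finset.univ) => k1 a)).add
    ((HasDerivAt.fun_sum fun a (_ : a ∈ Finset.univ) =>
      HasDerivAt.fun_sum fun b (_ : b ∈ Finset.univ) => k2 a b).const_mul (1/2))
  have c1' : ∀ a, pd 0 (pd (sp a) ψ) = pd (sp a) (pd 0 ψ) := fun a => pd_comm h _ _
  have c2' : ∀ a b, pd 0 (pd (sp a) (pd (sp b) ψ)) = pd (sp a) (pd (sp b) (pd 0 ψ)) := fun a b => by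
    rw [pd_comm (pd_smooth h _), c1']
  have hfun : (fun s => pair (c0 s) (fun a => c1 a s) (fun a b => c2 a b s)
      (fun _ _ _ => 0) ψ s) = _ :=
    funext fun s => show _ = ((c0 s * ψ (pt s) - ∑ a, c1 a s * pd (sp a) ψ (pt s))
      + 1 / 2 * ∑ a, ∑ b, c2 a b s * pd (sp a) (pd (sp b) ψ) (pt s)) by simp [pair]
  rw [hfun]
  refine HasDerivAt.congr_deriv K ?_
  simp only [pair, c1', c2', Finset.sum_add_distrib]
  simp
  ring

/-! ### Octupoles that annihilate all test functions -/

theorem pd_coord (a b : Fin 3) :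
    pd (sp a) (fun x => x (sp b)) = fun _ => if a = b then 1 else 0 := by
  funext x
  have : HasFDerivAt (fun x : Fin 4 → ℝ => x (sp b))
    (ContinuousLinearMap.proj (R := ℝ) (φ := fun _ : Fin 4 => ℝ) (sp b)) x := by
    exact (ContinuousLinearMap.proj (R := ℝ) (φ := fun _ : Fin 4 => ℝ) (sp b)).hasFDerivAt
  rw [pd, this.fderiv]
  simp [e4, sp, eq_comm]

theorem pd_const (μ : Fin 4) (k : ℝ) : pd μ (fun _ => k) = fun _ => 0 := by
  funext x
  simp [pd]

theorem coord_smooth (a : Fin 3) : ContDiff ℝ (⊤ : ℕ∞) (fun x : Fin 4 → ℝ => x (sp a)) := by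
  fun_prop

theorem pair_zero (c0 : ℝ) (c1 : Fin 3 → ℝ) (c2 : Fin 3 → Fin 3 → ℝ)
    (c3 : Fin 3 → Fin 3 → Fin 3 → ℝ) (σ : ℝ) : pair c0 c1 c2 c3 (fun _ => 0) σ = 0 := by
  simp [pair, pd_const]

/-- Multiplying the test function by the spatial coordinate `z^i`, which vanishes on the worldline,
lowers the order of the octupole by one. -/
theorem pair_coord_mul {ψ : (Fin 4 → ℝ) → ℝ}
    (h : ContDiff ℝ (⊤ : ℕ∞) ψ) (c0 : ℝ) (c1 : Fin 3 → ℝ) (c2 : Fin 3 → Fin 3 → ℝ)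
    (c3 : Fin 3 → Fin 3 → Fin 3 → ℝ) (hc2 : ∀ a b, c2 a b = c2 b a)
    (hc3 : ∀ a b c, c3 a b c = c3 b a c) (hc3' : ∀ a b c, c3 a b c = c3 a c b)
    (i : Fin 3) (σ : ℝ) :
    pair c0 c1 c2 c3 (fun x => x (sp i) * ψ x) σ
      = pair (-c1 i) (fun a => -c2 a i) (fun a b => -c3 a b i) (fun _ _ _ => 0) ψ σ := by
  have hp : pt σ (sp i) = 0 := by simp [pt, sp]
  rw [pair_mul (coord_smooth i) h c0 c1 c2 c3 hc2 hc3 hc3']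
  congr 1
  · simp [pair, pd_coord, pd_const, hp]
  · funext a; simp [pd_coord, pd_const, hp]
  · funext a b; simp [pd_coord, hp]
  · funext a b c; simp [hp]

/-- The octupole with coefficient functions `d0, …, d3` annihilates all test functions. -/
def Null (d0 : ℝ → ℝ) (d1 : Fin 3 → ℝ → ℝ) (d2 : Fin 3 → Fin 3 → ℝ → ℝ)
    (d3 : Fin 3 → Fin 3 → Fin 3 → ℝ → ℝ) : Prop :=
  ∀ ψ : (Fin 4 → ℝ) → ℝ, ContDiff ℝ (⊤ : ℕ∞) ψ → HasCompactSupport ψ →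
    ∫ σ, pair (d0 σ) (fun a => d1 a σ) (fun a b => d2 a b σ) (fun a b c => d3 a b c σ) ψ σ = 0

/-- If a symmetric octupole annihilates all test functions, so does the quadrupole obtained by
fixing one index and negating; this is the hypothesis applied to test functions `z^i ψ`. -/
theorem Null.shift {d0 : ℝ → ℝ} {d1 : Fin 3 → ℝ → ℝ} {d2 : Fin 3 → Fin 3 → ℝ → ℝ}
    {d3 : Fin 3 → Fin 3 → Fin 3 → ℝ → ℝ} (H : Null d0 d1 d2 d3)
    (hd2 : ∀ a b σ, d2 a b σ = d2 b a σ)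
    (hd3 : ∀ a b c σ, d3 a b c σ = d3 b a c σ) (hd3' : ∀ a b c σ, d3 a b c σ = d3 a c b σ)
    (i : Fin 3) :
    Null (fun σ => -d1 i σ) (fun a σ => -d2 a i σ) (fun a b σ => -d3 a b i σ)
      (fun _ _ _ _ => 0) := by
  intro ψ h hs
  have := H (fun x => x (sp i) * ψ x) ((coord_smooth i).mul h) hs.mul_left
  refine Eq.trans ?_ this
  refine integral_congr_ae (Filter.Eventually.of_forall fun σ => ?_)
  exact (pair_coord_mul h (d0 σ) (fun a => d1 a σ) _ _ (fun a b => hd2 a b σ) (fun a b c => hd3 a b c σ)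
    (fun a b c => hd3' a b c σ) i σ).symm

/-- Every test function on the worldline extends to a test function on `ℝ⁴`. -/
theorem exists_extension {f : ℝ → ℝ} (hf : ContDiff ℝ (⊤ : ℕ∞) f) (hs : HasCompactSupport f) :
    ∃ ψ : (Fin 4 → ℝ) → ℝ, ContDiff ℝ (⊤ : ℕ∞) ψ ∧ HasCompactSupport ψ ∧
      ∀ σ, ψ (pt σ) = f σ := by
  obtain ⟨R, hR0, hR⟩ := hs.isCompact.isBounded.subset_closedBall_lt 0 0
  let η : ContDiffBump (0 : Fin 4 → ℝ) := ⟨R, R + 1, hR0, by linarith⟩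
  refine ⟨fun x => f (x 0) * η x, ?_, ?_, ?_⟩
  · exact (hf.comp (contDiff_apply ℝ ℝ (0 : Fin 4))).mul η.contDiff
  · exact η.hasCompactSupport.mul_left
  · intro σ
    have h0 : pt σ 0 = σ := by simp [pt]
    simp only [h0]
    by_cases hσ : f σ = 0
    · simp [hσ]
    · have h1 : σ ∈ Metric.closedBall (0 : ℝ) R := hR (subset_tsupport f hσ)
      have h2 : η (pt σ) = 1 := by
        apply η.one_of_mem_closedBall
        rw [mem_closedBall_zero_iff] at h1 ⊢
        refine (pi_norm_le_iff_of_nonneg hR0.le).2 fun i => ?_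
        by_cases hi : i = 0
        · simpa [pt, hi] using h1
        · simpa [pt, hi] using hR0.le
      rw [h2, mul_one]

/-- The fundamental lemma of the calculus of variations, for a monopole on the worldline. -/
theorem Null.zeroth {d0 : ℝ → ℝ} (hc : Continuous d0) (H : Null d0 (fun _ _ => 0)
    (fun _ _ _ => 0) (fun _ _ _ _ => 0)) (σ : ℝ) : d0 σ = 0 := by
  have hae : ∀ᵐ x, d0 x = 0 := by
    refine ae_eq_zero_of_integral_contDiff_smul_eq_zero hc.locallyIntegrable fun f hf hs => ?_
    obtain ⟨ψ, h1, h2, h3⟩ := exists_extension hf hs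
    rw [← H ψ h1 h2]
    congr 1
    funext s
    simp [pair, h3, mul_comm]
  exact congrFun ((Continuous.ae_eq_iff_eq volume hc continuous_const).1 hae) σ

/-- A continuous octupole with symmetric coefficients annihilating all test functions has zero
coefficients, by descending induction on the order. -/
theorem Null.coeff_eq_zero {d0 : ℝ → ℝ} {d1 : Fin 3 → ℝ → ℝ} {d2 : Fin 3 → Fin 3 → ℝ → ℝ}
    {d3 : Fin 3 → Fin 3 → Fin 3 → ℝ → ℝ} (H : Null d0 d1 d2 d3) (h0 : Continuous d0)
    (h1 : ∀ a, Continuous (d1 a)) (h2 : ∀ a b, Continuous (d2 a b))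
    (h3 : ∀ a b c, Continuous (d3 a b c))
    (hd2 : ∀ a b σ, d2 a b σ = d2 b a σ)
    (hd3 : ∀ a b c σ, d3 a b c σ = d3 b a c σ) (hd3' : ∀ a b c σ, d3 a b c σ = d3 a c b σ) :
    (∀ σ, d0 σ = 0) ∧ (∀ a σ, d1 a σ = 0) ∧ (∀ a b σ, d2 a b σ = 0) ∧
      (∀ a b c σ, d3 a b c σ = 0) := by
  have S1 := fun i => H.shift hd2 hd3 hd3' i
  have S2 := fun i j => (S1 i).shift (fun a b σ => by rw [hd3]) (fun _ _ _ _ => rfl)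
    (fun _ _ _ _ => rfl) j
  have S3 := fun i j k => (S2 i j).shift (fun _ _ _ => by simp) (fun _ _ _ _ => rfl)
    (fun _ _ _ _ => rfl) k
  simp only [neg_neg, neg_zero] at S2 S3
  have z3 : ∀ a b c σ, d3 a b c σ = 0 := fun a b c σ => by
    simpa using (S3 c b a).zeroth (h3 a b c).neg σ
  simp only [z3, neg_zero] at S2 S1
  have z2 : ∀ a b σ, d2 a b σ = 0 := fun a b σ => (S2 b a).zeroth (h2 a b) σ
  simp only [z2, neg_zero] at S1
  have z1 : ∀ a σ, d1 a σ = 0 := fun a σ => by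
    simpa using (S1 a).zeroth (h1 a).neg σ
  refine ⟨fun σ => ?_, z1, z2, z3⟩
  refine Null.zeroth h0 ?_ σ
  have e1 : d1 = fun _ _ => 0 := funext fun a => funext fun s => z1 a s
  have e2 : d2 = fun _ _ _ => 0 := funext fun a => funext fun b => funext fun s => z2 a b s
  have e3 : d3 = fun _ _ _ _ => 0 :=
    funext fun a => funext fun b => funext fun c => funext fun s => z3 a b c s
  rwa [e1, e2, e3] at H

/-! ### Weak divergence condition and dynamical equations -/

/-- The weak divergence condition `∇_μT^{μν} = g^{νρ}F_{ρμ}J^μ` for a stress-energy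
quadrupole `T` with current octupole `J` in an external electromagnetic field `F` is
equivalent to the charged quadrupole dynamical equations. -/
theorem charged_quadrupole_divergence_iff_equations
    (χ0 : Fin 4 → Fin 4 → ℝ → ℝ)
    (χ1 : Fin 4 → Fin 4 → Fin 3 → ℝ → ℝ)
    (χ2 : Fin 4 → Fin 4 → Fin 3 → Fin 3 → ℝ → ℝ)
    (γ0 : Fin 4 → ℝ → ℝ)
    (γ1 : Fin 4 → Fin 3 → ℝ → ℝ)
    (γ2 : Fin 4 → Fin 3 → Fin 3 → ℝ → ℝ)
    (γ3 : Fin 4 → Fin 3 → Fin 3 → Fin 3 → ℝ → ℝ)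
    (hχ0s : ∀ μ ν, ContDiff ℝ (⊤ : ℕ∞) (χ0 μ ν))
    (hχ1s : ∀ μ ν a, ContDiff ℝ (⊤ : ℕ∞) (χ1 μ ν a))
    (hχ2s : ∀ μ ν a b, ContDiff ℝ (⊤ : ℕ∞) (χ2 μ ν a b))
    (hγ0s : ∀ μ, ContDiff ℝ (⊤ : ℕ∞) (γ0 μ))
    (hγ1s : ∀ μ a, ContDiff ℝ (⊤ : ℕ∞) (γ1 μ a))
    (hγ2s : ∀ μ a b, ContDiff ℝ (⊤ : ℕ∞) (γ2 μ a b))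
    (hγ3s : ∀ μ a b c, ContDiff ℝ (⊤ : ℕ∞) (γ3 μ a b c))
    (hχ0sym : ∀ μ ν σ, χ0 μ ν σ = χ0 ν μ σ)
    (hχ1sym : ∀ μ ν a σ, χ1 μ ν a σ = χ1 ν μ a σ)
    (hχ2sym : ∀ μ ν a b σ, χ2 μ ν a b σ = χ2 ν μ a b σ)
    (hχ2symab : ∀ μ ν a b σ, χ2 μ ν a b σ = χ2 μ ν b a σ)
    (hγ2sym : ∀ μ a b σ, γ2 μ a b σ = γ2 μ b a σ)
    (hγ3sym1 : ∀ μ a b c σ, γ3 μ a b c σ = γ3 μ b a c σ)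
    (hγ3sym2 : ∀ μ a b c σ, γ3 μ a b c σ = γ3 μ a c b σ)
    (Γ : Fin 4 → Fin 4 → Fin 4 → (Fin 4 → ℝ) → ℝ)
    (hΓs : ∀ ρ μ ν, ContDiff ℝ (⊤ : ℕ∞) (Γ ρ μ ν))
    (F : Fin 4 → Fin 4 → (Fin 4 → ℝ) → ℝ)
    (hFs : ∀ ρ μ, ContDiff ℝ (⊤ : ℕ∞) (F ρ μ)) :
    (∀ θ : (Fin 4 → ℝ) → Fin 4 → ℝ,
      ContDiff ℝ (⊤ : ℕ∞) θ → HasCompactSupport θ →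
      (∑ μ : Fin 4, ∑ ν : Fin 4, ∫ σ : ℝ,
        (χ0 μ ν σ * Efield Γ θ μ ν (pt σ)
          - ∑ a : Fin 3, χ1 μ ν a σ * pd (sp a) (Efield Γ θ μ ν) (pt σ)
          + (1/2) * ∑ a : Fin 3, ∑ b : Fin 3,
              χ2 μ ν a b σ * pd (sp a) (pd (sp b) (Efield Γ θ μ ν)) (pt σ)))
      =
      (∑ μ : Fin 4, ∫ σ : ℝ,
        (γ0 μ σ * Gfield F θ μ (pt σ)
          - ∑ a : Fin 3, γ1 μ a σ * pd (sp a) (Gfield F θ μ) (pt σ)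
          + (1/2) * ∑ a : Fin 3, ∑ b : Fin 3,
              γ2 μ a b σ * pd (sp a) (pd (sp b) (Gfield F θ μ)) (pt σ)
          - (1/6) * ∑ a : Fin 3, ∑ b : Fin 3, ∑ c : Fin 3,
              γ3 μ a b c σ * pd (sp a) (pd (sp b) (pd (sp c) (Gfield F θ μ))) (pt σ))))
    ↔
    (∀ σ : ℝ,
      (∀ μ, deriv (χ0 μ 0) σ
          + (∑ ν : Fin 4, ∑ ρ : Fin 4, Γ μ ν ρ (pt σ) * χ0 ρ ν σ)
          - (∑ ν : Fin 4, ∑ ρ : Fin 4, ∑ a : Fin 3,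
              χ1 ρ ν a σ * pd (sp a) (Γ μ ν ρ) (pt σ))
          + (1/2) * ∑ ν : Fin 4, ∑ ρ : Fin 4, ∑ a : Fin 3, ∑ b : Fin 3,
              χ2 ρ ν a b σ * pd (sp b) (pd (sp a) (Γ μ ν ρ)) (pt σ)
        = ∑ ρ : Fin 4,
            (γ0 ρ σ * F μ ρ (pt σ)
              - ∑ a : Fin 3, γ1 ρ a σ * pd (sp a) (F μ ρ) (pt σ)
              + (1/2) * ∑ a : Fin 3, ∑ b : Fin 3,
                  γ2 ρ a b σ * pd (sp b) (pd (sp a) (F μ ρ)) (pt σ)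
              - (1/6) * ∑ a : Fin 3, ∑ b : Fin 3, ∑ c : Fin 3,
                  γ3 ρ a b c σ * pd (sp c) (pd (sp b) (pd (sp a) (F μ ρ))) (pt σ))) ∧
      (∀ μ a, deriv (fun s => χ1 μ 0 a s) σ
          + χ0 μ (sp a) σ
          + (∑ ν : Fin 4, ∑ ρ : Fin 4, Γ μ ν ρ (pt σ) * χ1 ρ ν a σ)
          - (∑ ν : Fin 4, ∑ ρ : Fin 4, ∑ b : Fin 3,
              pd (sp b) (Γ μ ν ρ) (pt σ) * χ2 ρ ν b a σ)
        = ∑ ρ : Fin 4,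
            (γ1 ρ a σ * F μ ρ (pt σ)
              - ∑ b : Fin 3, γ2 ρ a b σ * pd (sp b) (F μ ρ) (pt σ)
              + (1/2) * ∑ b : Fin 3, ∑ c : Fin 3,
                  γ3 ρ a b c σ * pd (sp c) (pd (sp b) (F μ ρ)) (pt σ))) ∧
      (∀ μ a b, deriv (fun s => χ2 μ 0 a b s) σ
          + (χ1 μ (sp b) a σ + χ1 μ (sp a) b σ)
          + (∑ ν : Fin 4, ∑ ρ : Fin 4, Γ μ ν ρ (pt σ) * χ2 ρ ν a b σ)
        = ∑ ρ : Fin 4,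
            (γ2 ρ a b σ * F μ ρ (pt σ)
              - ∑ c : Fin 3, γ3 ρ a b c σ * pd (sp c) (F μ ρ) (pt σ))) ∧
      (∀ μ a b c,
          (1/6) * (χ2 μ (sp a) b c σ + χ2 μ (sp a) c b σ + χ2 μ (sp b) a c σ +
            χ2 μ (sp b) c a σ + χ2 μ (sp c) a b σ + χ2 μ (sp c) b a σ)
        = (1/3) * ∑ ρ : Fin 4, γ3 ρ a b c σ * F μ ρ (pt σ))) := by
  -- `D0`, …, `D3` are the residuals (left side minus right side) of equations (i)–(iv). They are
  -- introduced through existentials so that their definitions are not unfolded.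
  obtain ⟨D0, hD0⟩ : ∃ D0 : Fin 4 → ℝ → ℝ, ∀ μ σ, D0 μ σ =
      (deriv (χ0 μ 0) σ
          + (∑ ν : Fin 4, ∑ ρ : Fin 4, Γ μ ν ρ (pt σ) * χ0 ρ ν σ)
          - (∑ ν : Fin 4, ∑ ρ : Fin 4, ∑ a : Fin 3,
              χ1 ρ ν a σ * pd (sp a) (Γ μ ν ρ) (pt σ))
          + (1/2) * ∑ ν : Fin 4, ∑ ρ : Fin 4, ∑ a : Fin 3, ∑ b : Fin 3,
              χ2 ρ ν a b σ * pd (sp b) (pd (sp a) (Γ μ ν ρ)) (pt σ))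
        - ∑ ρ : Fin 4,
            (γ0 ρ σ * F μ ρ (pt σ)
              - ∑ a : Fin 3, γ1 ρ a σ * pd (sp a) (F μ ρ) (pt σ)
              + (1/2) * ∑ a : Fin 3, ∑ b : Fin 3,
                  γ2 ρ a b σ * pd (sp b) (pd (sp a) (F μ ρ)) (pt σ)
              - (1/6) * ∑ a : Fin 3, ∑ b : Fin 3, ∑ c : Fin 3,
                  γ3 ρ a b c σ * pd (sp c) (pd (sp b) (pd (sp a) (F μ ρ))) (pt σ)) :=
    ⟨_, fun _ _ => rfl⟩
  obtain ⟨D1, hD1⟩ : ∃ D1 : Fin 4 → Fin 3 → ℝ → ℝ, ∀ μ a σ, D1 μ a σ =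
      (deriv (fun s => χ1 μ 0 a s) σ
          + χ0 μ (sp a) σ
          + (∑ ν : Fin 4, ∑ ρ : Fin 4, Γ μ ν ρ (pt σ) * χ1 ρ ν a σ)
          - (∑ ν : Fin 4, ∑ ρ : Fin 4, ∑ b : Fin 3,
              pd (sp b) (Γ μ ν ρ) (pt σ) * χ2 ρ ν b a σ))
        - ∑ ρ : Fin 4,
            (γ1 ρ a σ * F μ ρ (pt σ)
              - ∑ b : Fin 3, γ2 ρ a b σ * pd (sp b) (F μ ρ) (pt σ)
              + (1/2) * ∑ b : Fin 3, ∑ c : Fin 3,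
                  γ3 ρ a b c σ * pd (sp c) (pd (sp b) (F μ ρ)) (pt σ)) :=
    ⟨_, fun _ _ _ => rfl⟩
  obtain ⟨D2, hD2⟩ : ∃ D2 : Fin 4 → Fin 3 → Fin 3 → ℝ → ℝ, ∀ μ a b σ, D2 μ a b σ =
      (deriv (fun s => χ2 μ 0 a b s) σ
          + (χ1 μ (sp b) a σ + χ1 μ (sp a) b σ)
          + (∑ ν : Fin 4, ∑ ρ : Fin 4, Γ μ ν ρ (pt σ) * χ2 ρ ν a b σ))
        - ∑ ρ : Fin 4,
            (γ2 ρ a b σ * F μ ρ (pt σ)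
              - ∑ c : Fin 3, γ3 ρ a b c σ * pd (sp c) (F μ ρ) (pt σ)) :=
    ⟨_, fun _ _ _ _ => rfl⟩
  obtain ⟨D3, hD3⟩ : ∃ D3 : Fin 4 → Fin 3 → Fin 3 → Fin 3 → ℝ → ℝ, ∀ μ a b c σ, D3 μ a b c σ =
      (1/6) * (χ2 μ (sp a) b c σ + χ2 μ (sp a) c b σ + χ2 μ (sp b) a c σ +
            χ2 μ (sp b) c a σ + χ2 μ (sp c) a b σ + χ2 μ (sp c) b a σ)
        - (1/3) * ∑ ρ : Fin 4, γ3 ρ a b c σ * F μ ρ (pt σ) :=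
    ⟨_, fun _ _ _ _ _ => rfl⟩
  have cpt := continuous_pt
  have cderiv : ∀ {f : ℝ → ℝ}, ContDiff ℝ (⊤ : ℕ∞) f → Continuous (deriv f) :=
    fun h => h.continuous_deriv (by simp)
  have cχ0 := fun μ ν => (hχ0s μ ν).continuous
  have cχ1 := fun μ ν a => (hχ1s μ ν a).continuous
  have cχ2 := fun μ ν a b => (hχ2s μ ν a b).continuous
  have cγ0 := fun μ => (hγ0s μ).continuous
  have cγ1 := fun μ a => (hγ1s μ a).continuous
  have cγ2 := fun μ a b => (hγ2s μ a b).continuous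
  have cγ3 := fun μ a b c => (hγ3s μ a b c).continuous
  have cΓ := fun ρ μ ν => (hΓs ρ μ ν).continuous
  have cΓ1 := fun ρ μ ν a => (pd_smooth (hΓs ρ μ ν) a).continuous
  have cΓ2 := fun ρ μ ν a b => (pd_smooth (pd_smooth (hΓs ρ μ ν) a) b).continuous
  have cF := fun ρ μ => (hFs ρ μ).continuous
  have cF1 := fun ρ μ a => (pd_smooth (hFs ρ μ) a).continuous
  have cF2 := fun ρ μ a b => (pd_smooth (pd_smooth (hFs ρ μ) a) b).continuous
  have cF3 := fun ρ μ a b c => (pd_smooth (pd_smooth (pd_smooth (hFs ρ μ) a) b) c).continuous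
  have dχ0 := fun μ ν => cderiv (hχ0s μ ν)
  have dχ1 := fun μ ν a => cderiv (hχ1s μ ν a)
  have dχ2 := fun μ ν a b => cderiv (hχ2s μ ν a b)
  have cD0 : ∀ μ, Continuous (D0 μ) := fun μ => by
    rw [funext (hD0 μ)]; fun_prop
  have cD1 : ∀ μ a, Continuous (D1 μ a) := fun μ a => by
    rw [funext (hD1 μ a)]; fun_prop
  have cD2 : ∀ μ a b, Continuous (D2 μ a b) := fun μ a b => by
    rw [funext (hD2 μ a b)]; fun_prop
  have cD3 : ∀ μ a b c, Continuous (D3 μ a b c) := fun μ a b c => by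
    rw [funext (hD3 μ a b c)]; fun_prop
  have sD2 : ∀ μ a b σ, D2 μ a b σ = D2 μ b a σ := fun μ a b σ => by
    simp only [hD2, hχ2symab _ _ a b, hγ2sym _ a b, hγ3sym1 _ a b,
      add_comm (χ1 μ (sp b) a σ)]
  have sD3 : ∀ μ a b c σ, D3 μ a b c σ = D3 μ b a c σ := fun μ a b c σ => by
    simp only [hD3, hγ3sym1 _ a b c]
    ring
  have sD3' : ∀ μ a b c σ, D3 μ a b c σ = D3 μ a c b σ := fun μ a b c σ => by
    simp only [hD3, hγ3sym2 _ a b c]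
    ring
  -- The terms of the weak condition containing one component `ψ = θ_ρ`. Equations (i)–(iv) have
  -- `∂_0` on the coefficients instead of on `ψ`; the difference is the total `σ`-derivative of the
  -- pairing of `χ^{0ρ…}` with `ψ`, subtracted at the end.
  have component : ∀ (ρ : Fin 4) (ψ : (Fin 4 → ℝ) → ℝ), ContDiff ℝ (⊤ : ℕ∞) ψ → ∀ σ,
      (∑ μ, ∑ ν, pair (χ0 μ ν σ) (fun a => χ1 μ ν a σ) (fun a b => χ2 μ ν a b σ)
          (fun _ _ _ => 0) (fun x => Γ ρ μ ν x * ψ x) σ)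
        - (∑ μ, pair (χ0 μ ρ σ) (fun a => χ1 μ ρ a σ) (fun a b => χ2 μ ρ a b σ)
          (fun _ _ _ => 0) (pd μ ψ) σ)
        - (∑ μ, pair (γ0 μ σ) (fun a => γ1 μ a σ) (fun a b => γ2 μ a b σ)
          (fun a b c => γ3 μ a b c σ) (fun x => F ρ μ x * ψ x) σ)
      = pair (D0 ρ σ) (fun a => D1 ρ a σ) (fun a b => D2 ρ a b σ)
          (fun a b c => 3 * D3 ρ a b c σ) ψ σ
        - (pair (deriv (χ0 0 ρ) σ) (fun a => deriv (χ1 0 ρ a) σ) (fun a b => deriv (χ2 0 ρ a b) σ)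
              (fun _ _ _ => 0) ψ σ
          + pair (χ0 0 ρ σ) (fun a => χ1 0 ρ a σ) (fun a b => χ2 0 ρ a b σ) (fun _ _ _ => 0)
              (pd 0 ψ) σ) := by
    intro ρ ψ h σ
    have hsp := pair_pd_space h (fun i => χ0 (sp i) ρ σ) (fun i a => χ1 (sp i) ρ a σ)
      (fun i a b => χ2 (sp i) ρ a b σ) σ
    -- Only the derivatives `∂_μ ψ` with `μ = sp i` raise the order of the multipole.
    have hsplit := Fin.sum_univ_succ (fun μ => pair (χ0 μ ρ σ) (fun a => χ1 μ ρ a σ)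
      (fun a b => χ2 μ ρ a b σ) (fun _ _ _ => 0) (pd μ ψ) σ)
    rw [hsplit]
    change _ - (_ + ∑ i : Fin 3, pair (χ0 (sp i) ρ σ) (fun a => χ1 (sp i) ρ a σ)
      (fun a b => χ2 (sp i) ρ a b σ) (fun _ _ _ => 0) (pd (sp i) ψ) σ) - _ = _
    rw [hsp]
    have hΓm := fun μ ν => pair_mul (hΓs ρ μ ν) h (χ0 μ ν σ) (fun a => χ1 μ ν a σ)
      (fun a b => χ2 μ ν a b σ) (fun _ _ _ => 0) (fun a b => hχ2symab μ ν a b σ)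
      (fun _ _ _ => rfl) (fun _ _ _ => rfl) σ
    have hFm := fun μ => pair_mul (hFs ρ μ) h (γ0 μ σ) (fun a => γ1 μ a σ)
      (fun a b => γ2 μ a b σ) (fun a b c => γ3 μ a b c σ) (fun a b => hγ2sym μ a b σ)
      (fun a b c => hγ3sym1 μ a b c σ) (fun a b c => hγ3sym2 μ a b c σ) σ
    simp only [hΓm, hFm, pair_sum_coeff]
    have rearr : ∀ X p Y Z P Q : ℝ, X + Y - Z + Q = P → X - (p + -Y) - Z = P - (Q + p) := by
      intro X p Y Z P Q e; rw [← e]; ring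
    apply rearr
    rw [pair_add_coeff, pair_sub_coeff, pair_add_coeff]
    have e0 : deriv (χ0 ρ 0) σ = deriv (χ0 0 ρ) σ :=
      congrArg (fun f => deriv f σ) (funext fun s => hχ0sym ρ 0 s)
    have e1 : ∀ a, deriv (fun s => χ1 ρ 0 a s) σ = deriv (χ1 0 ρ a) σ := fun a =>
      congrArg (fun f => deriv f σ) (funext fun s => hχ1sym ρ 0 a s)
    have e2 : ∀ a b, deriv (fun s => χ2 ρ 0 a b s) σ = deriv (χ2 0 ρ a b) σ := fun a b =>
      congrArg (fun f => deriv f σ) (funext fun s => hχ2sym ρ 0 a b s)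
    congr 1
    · rw [hD0, e0]
      have t1 : ∑ ν : Fin 4, ∑ ρ' : Fin 4, Γ ρ ν ρ' (pt σ) * χ0 ρ' ν σ
          = ∑ ν : Fin 4, ∑ ρ' : Fin 4, χ0 ν ρ' σ * Γ ρ ν ρ' (pt σ) :=
        Finset.sum_congr rfl fun ν _ => Finset.sum_congr rfl fun ρ' _ => by
          rw [hχ0sym ρ' ν]; ring
      have t2 : ∑ ν : Fin 4, ∑ ρ' : Fin 4, ∑ a : Fin 3, χ1 ρ' ν a σ * pd (sp a) (Γ ρ ν ρ') (pt σ)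
          = ∑ ν : Fin 4, ∑ ρ' : Fin 4, ∑ a : Fin 3,
              χ1 ν ρ' a σ * pd (sp a) (Γ ρ ν ρ') (pt σ) :=
        Finset.sum_congr rfl fun ν _ => Finset.sum_congr rfl fun ρ' _ =>
          Finset.sum_congr rfl fun a _ => by rw [hχ1sym ρ' ν]
      have t3 : ∑ ν : Fin 4, ∑ ρ' : Fin 4, ∑ a : Fin 3, ∑ b : Fin 3,
              χ2 ρ' ν a b σ * pd (sp b) (pd (sp a) (Γ ρ ν ρ')) (pt σ)
          = ∑ ν : Fin 4, ∑ ρ' : Fin 4, ∑ a : Fin 3, ∑ b : Fin 3,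
              χ2 ν ρ' a b σ * pd (sp a) (pd (sp b) (Γ ρ ν ρ')) (pt σ) :=
        Finset.sum_congr rfl fun ν _ => Finset.sum_congr rfl fun ρ' _ =>
          Finset.sum_congr rfl fun a _ => Finset.sum_congr rfl fun b _ => by
            rw [hχ2sym ρ' ν, pd_comm (hΓs _ _ _)]
      have t4 : ∀ ρ' : Fin 4, ∑ a : Fin 3, ∑ b : Fin 3,
            γ2 ρ' a b σ * pd (sp b) (pd (sp a) (F ρ ρ')) (pt σ)
          = ∑ a : Fin 3, ∑ b : Fin 3,
            γ2 ρ' a b σ * pd (sp a) (pd (sp b) (F ρ ρ')) (pt σ) := fun ρ' =>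
        Finset.sum_congr rfl fun a _ => Finset.sum_congr rfl fun b _ => by
            rw [pd_comm (hFs _ _)]
      have t5 : ∀ ρ' : Fin 4, ∑ a : Fin 3, ∑ b : Fin 3, ∑ c : Fin 3,
            γ3 ρ' a b c σ * pd (sp c) (pd (sp b) (pd (sp a) (F ρ ρ'))) (pt σ)
          = ∑ a : Fin 3, ∑ b : Fin 3, ∑ c : Fin 3,
            γ3 ρ' a b c σ * pd (sp a) (pd (sp b) (pd (sp c) (F ρ ρ'))) (pt σ) := fun ρ' =>
        Finset.sum_congr rfl fun a _ => Finset.sum_congr rfl fun b _ =>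
          Finset.sum_congr rfl fun c _ => by
            rw [pd_comm (hFs _ _) (sp b) (sp a), pd_comm (pd_smooth (hFs _ _) _) (sp c) (sp a),
              pd_comm (hFs _ _) (sp c) (sp b)]
      simp only [t1, t2, t3, t4, t5, pair, Finset.sum_add_distrib, Finset.sum_sub_distrib,
        ← Finset.mul_sum, zero_mul, Finset.sum_const_zero]
      ring
    · funext a
      rw [hD1, e1]
      have t1 : ∑ ν : Fin 4, ∑ ρ' : Fin 4, Γ ρ ν ρ' (pt σ) * χ1 ρ' ν a σ
          = ∑ ν : Fin 4, ∑ ρ' : Fin 4, χ1 ν ρ' a σ * Γ ρ ν ρ' (pt σ) :=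
        Finset.sum_congr rfl fun ν _ => Finset.sum_congr rfl fun ρ' _ => by
          rw [hχ1sym ρ' ν]; ring
      have t2 : ∑ ν : Fin 4, ∑ ρ' : Fin 4, ∑ b : Fin 3, pd (sp b) (Γ ρ ν ρ') (pt σ) * χ2 ρ' ν b a σ
          = ∑ ν : Fin 4, ∑ ρ' : Fin 4, ∑ b : Fin 3,
              χ2 ν ρ' a b σ * pd (sp b) (Γ ρ ν ρ') (pt σ) :=
        Finset.sum_congr rfl fun ν _ => Finset.sum_congr rfl fun ρ' _ =>
          Finset.sum_congr rfl fun b _ => by rw [hχ2sym ρ' ν, hχ2symab _ _ b a]; ring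
      have t4 : ∀ ρ' : Fin 4, ∑ b : Fin 3, ∑ c : Fin 3,
            γ3 ρ' a b c σ * pd (sp c) (pd (sp b) (F ρ ρ')) (pt σ)
          = ∑ b : Fin 3, ∑ c : Fin 3,
            γ3 ρ' a b c σ * pd (sp b) (pd (sp c) (F ρ ρ')) (pt σ) := fun ρ' =>
        Finset.sum_congr rfl fun b _ => Finset.sum_congr rfl fun c _ => by
            rw [pd_comm (hFs _ _)]
      simp only [t1, t2, t4, Finset.sum_add_distrib, Finset.sum_sub_distrib,
        ← Finset.mul_sum, zero_mul, Finset.sum_const_zero, hχ0sym ρ (sp a)]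
      ring
    · funext a b
      rw [hD2, e2]
      have t1 : ∑ ν : Fin 4, ∑ ρ' : Fin 4, Γ ρ ν ρ' (pt σ) * χ2 ρ' ν a b σ
          = ∑ ν : Fin 4, ∑ ρ' : Fin 4, χ2 ν ρ' a b σ * Γ ρ ν ρ' (pt σ) :=
        Finset.sum_congr rfl fun ν _ => Finset.sum_congr rfl fun ρ' _ => by
          rw [hχ2sym ρ' ν]; ring
      simp only [t1, Finset.sum_sub_distrib, zero_mul, Finset.sum_const_zero, hχ1sym ρ (sp _)]
      ring
    · funext a b c
      have z : ∀ g : Fin 4 → Fin 4 → ℝ, ∑ μ, ∑ ν, (0 : ℝ) * g μ ν = 0 := fun g => by simp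
      simp only [hD3, z, hχ2sym ρ (sp _)]
      ring
  -- Left side minus right side of the weak condition is the total pairing of `θ` with the residuals.
  have key : ∀ θ : (Fin 4 → ℝ) → Fin 4 → ℝ, ContDiff ℝ (⊤ : ℕ∞) θ → HasCompactSupport θ →
      (∑ μ : Fin 4, ∑ ν : Fin 4, ∫ σ : ℝ,
        (χ0 μ ν σ * Efield Γ θ μ ν (pt σ)
          - ∑ a : Fin 3, χ1 μ ν a σ * pd (sp a) (Efield Γ θ μ ν) (pt σ)
          + (1/2) * ∑ a : Fin 3, ∑ b : Fin 3,
              χ2 μ ν a b σ * pd (sp a) (pd (sp b) (Efield Γ θ μ ν)) (pt σ)))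
      - (∑ μ : Fin 4, ∫ σ : ℝ,
        (γ0 μ σ * Gfield F θ μ (pt σ)
          - ∑ a : Fin 3, γ1 μ a σ * pd (sp a) (Gfield F θ μ) (pt σ)
          + (1/2) * ∑ a : Fin 3, ∑ b : Fin 3,
              γ2 μ a b σ * pd (sp a) (pd (sp b) (Gfield F θ μ)) (pt σ)
          - (1/6) * ∑ a : Fin 3, ∑ b : Fin 3, ∑ c : Fin 3,
              γ3 μ a b c σ * pd (sp a) (pd (sp b) (pd (sp c) (Gfield F θ μ))) (pt σ)))
      = ∑ ρ, ∫ σ, pair (D0 ρ σ) (fun a => D1 ρ a σ) (fun a b => D2 ρ a b σ)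
          (fun a b c => 3 * D3 ρ a b c σ) (fun x => θ x ρ) σ := by
    intro θ hθ hθs
    have hc : ∀ ρ, ContDiff ℝ (⊤ : ℕ∞) (fun x => θ x ρ) := contDiff_pi.1 hθ
    have hcs : ∀ ρ, HasCompactSupport (fun x => θ x ρ) := fun ρ =>
      hθs.comp_left (g := fun v : Fin 4 → ℝ => v ρ) rfl
    have hG1 : ∀ μ, ∀ ρ, ContDiff ℝ (⊤ : ℕ∞) (fun x => F ρ μ x * θ x ρ) := fun μ ρ =>
      (hFs ρ μ).mul (hc ρ)
    have hE1 : ∀ μ ν, ∀ ρ, ContDiff ℝ (⊤ : ℕ∞) (fun x => Γ ρ μ ν x * θ x ρ) := fun μ ν ρ =>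
      (hΓs ρ μ ν).mul (hc ρ)
    have hEs : ∀ μ ν, ContDiff ℝ (⊤ : ℕ∞) (Efield Γ θ μ ν) := fun μ ν =>
      (ContDiff.sum fun ρ _ => hE1 μ ν ρ).sub (pd_smooth (hc ν) μ)
    have hGs : ∀ μ, ContDiff ℝ (⊤ : ℕ∞) (Gfield F θ μ) := fun μ =>
      ContDiff.sum fun ρ _ => hG1 μ ρ
    have hGc : ∀ μ, HasCompactSupport (Gfield F θ μ) := fun μ => by
      have : Gfield F θ μ = fun x => F 0 μ x * θ x 0 + F 1 μ x * θ x 1 + F 2 μ x * θ x 2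
          + F 3 μ x * θ x 3 := by
        funext x; simp [Gfield, Fin.sum_univ_four]
      rw [this]
      exact ((((hcs 0).mul_left).add ((hcs 1).mul_left)).add ((hcs 2).mul_left)).add
        ((hcs 3).mul_left)
    have hEc : ∀ μ ν, HasCompactSupport (Efield Γ θ μ ν) := fun μ ν => by
      have : Efield Γ θ μ ν = fun x => Γ 0 μ ν x * θ x 0 + Γ 1 μ ν x * θ x 1 + Γ 2 μ ν x * θ x 2
          + Γ 3 μ ν x * θ x 3 + (-1 : ℝ) * pd μ (fun y => θ y ν) x := by
        funext x; simp [Efield, Fin.sum_univ_four, sub_eq_add_neg]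
      rw [this]
      exact (((((hcs 0).mul_left).add ((hcs 1).mul_left)).add ((hcs 2).mul_left)).add
        ((hcs 3).mul_left)).add (HasCompactSupport.mul_left (f := fun _ => (-1 : ℝ))
          (pd_compact (hcs ν) μ))
    have hLint : ∀ μ ν, (fun σ => χ0 μ ν σ * Efield Γ θ μ ν (pt σ)
          - ∑ a : Fin 3, χ1 μ ν a σ * pd (sp a) (Efield Γ θ μ ν) (pt σ)
          + (1/2) * ∑ a : Fin 3, ∑ b : Fin 3,
              χ2 μ ν a b σ * pd (sp a) (pd (sp b) (Efield Γ θ μ ν)) (pt σ))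
        = fun σ => pair (χ0 μ ν σ) (fun a => χ1 μ ν a σ) (fun a b => χ2 μ ν a b σ)
          (fun _ _ _ => 0) (Efield Γ θ μ ν) σ := fun μ ν => by
      funext σ; simp [pair]
    have iL : ∀ μ ν, Integrable (fun σ => pair (χ0 μ ν σ) (fun a => χ1 μ ν a σ)
        (fun a b => χ2 μ ν a b σ) (fun _ _ _ => 0) (Efield Γ θ μ ν) σ) := fun μ ν =>
      integrable_pair (c3 := fun _ _ _ _ => 0) (cχ0 μ ν) (cχ1 μ ν) (cχ2 μ ν)
        (fun _ _ _ => continuous_const) (hEs μ ν) (hEc μ ν)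
    have iR : ∀ μ, Integrable (fun σ => pair (γ0 μ σ) (fun a => γ1 μ a σ)
        (fun a b => γ2 μ a b σ) (fun a b c => γ3 μ a b c σ) (Gfield F θ μ) σ) := fun μ =>
      integrable_pair (cγ0 μ) (cγ1 μ) (cγ2 μ) (cγ3 μ) (hGs μ) (hGc μ)
    have iD : ∀ ρ, Integrable (fun σ => pair (D0 ρ σ) (fun a => D1 ρ a σ) (fun a b => D2 ρ a b σ)
          (fun a b c => 3 * D3 ρ a b c σ) (fun x => θ x ρ) σ) := fun ρ =>
      integrable_pair (c3 := fun a b c σ => 3 * D3 ρ a b c σ) (cD0 ρ) (cD1 ρ) (cD2 ρ)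
        (fun a b c => continuous_const.mul (cD3 ρ a b c)) (hc ρ) (hcs ρ)
    have iW : ∀ ρ, Integrable (fun σ => pair (χ0 0 ρ σ) (fun a => χ1 0 ρ a σ)
        (fun a b => χ2 0 ρ a b σ) (fun _ _ _ => 0) (fun x => θ x ρ) σ) := fun ρ =>
      integrable_pair (c3 := fun _ _ _ _ => 0) (cχ0 0 ρ) (cχ1 0 ρ) (cχ2 0 ρ)
        (fun _ _ _ => continuous_const) (hc ρ) (hcs ρ)
    have iW' : ∀ ρ, Integrable (fun σ => pair (deriv (χ0 0 ρ) σ) (fun a => deriv (χ1 0 ρ a) σ)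
          (fun a b => deriv (χ2 0 ρ a b) σ) (fun _ _ _ => 0) (fun x => θ x ρ) σ
        + pair (χ0 0 ρ σ) (fun a => χ1 0 ρ a σ) (fun a b => χ2 0 ρ a b σ) (fun _ _ _ => 0)
          (pd 0 (fun x => θ x ρ)) σ) := fun ρ =>
      (integrable_pair (c3 := fun _ _ _ _ => 0) (dχ0 0 ρ) (dχ1 0 ρ) (dχ2 0 ρ)
        (fun _ _ _ => continuous_const) (hc ρ) (hcs ρ)).add
      (integrable_pair (c3 := fun _ _ _ _ => 0) (cχ0 0 ρ) (cχ1 0 ρ) (cχ2 0 ρ)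
        (fun _ _ _ => continuous_const) (pd_smooth (hc ρ) 0) (pd_compact (hcs ρ) 0))
    -- A total derivative of a compactly supported function integrates to zero.
    have zW : ∀ ρ, ∫ σ, (pair (deriv (χ0 0 ρ) σ) (fun a => deriv (χ1 0 ρ a) σ)
          (fun a b => deriv (χ2 0 ρ a b) σ) (fun _ _ _ => 0) (fun x => θ x ρ) σ
        + pair (χ0 0 ρ σ) (fun a => χ1 0 ρ a σ) (fun a b => χ2 0 ρ a b σ) (fun _ _ _ => 0)
          (pd 0 (fun x => θ x ρ)) σ) = 0 := fun ρ =>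
      integral_eq_zero_of_hasDerivAt_of_integrable
        (hasDerivAt_pair ((hχ0s 0 ρ).differentiable (by simp))
          (fun a => (hχ1s 0 ρ a).differentiable (by simp))
          (fun a b => (hχ2s 0 ρ a b).differentiable (by simp)) (hc ρ)) (iW' ρ) (iW ρ)
    -- Sum of the identities `component ρ` for `ψ = θ_ρ`.
    have hpt : ∀ σ, (∑ μ, ∑ ν, pair (χ0 μ ν σ) (fun a => χ1 μ ν a σ) (fun a b => χ2 μ ν a b σ)
          (fun _ _ _ => 0) (Efield Γ θ μ ν) σ)
        - (∑ μ, pair (γ0 μ σ) (fun a => γ1 μ a σ) (fun a b => γ2 μ a b σ)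
          (fun a b c => γ3 μ a b c σ) (Gfield F θ μ) σ)
        = ∑ ρ, (pair (D0 ρ σ) (fun a => D1 ρ a σ) (fun a b => D2 ρ a b σ)
            (fun a b c => 3 * D3 ρ a b c σ) (fun x => θ x ρ) σ
          - (pair (deriv (χ0 0 ρ) σ) (fun a => deriv (χ1 0 ρ a) σ)
              (fun a b => deriv (χ2 0 ρ a b) σ) (fun _ _ _ => 0) (fun x => θ x ρ) σ
            + pair (χ0 0 ρ σ) (fun a => χ1 0 ρ a σ) (fun a b => χ2 0 ρ a b σ) (fun _ _ _ => 0)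
              (pd 0 (fun x => θ x ρ)) σ)) := by
      intro σ
      have hE : ∀ μ ν, pair (χ0 μ ν σ) (fun a => χ1 μ ν a σ) (fun a b => χ2 μ ν a b σ)
          (fun _ _ _ => 0) (Efield Γ θ μ ν) σ
          = (∑ ρ, pair (χ0 μ ν σ) (fun a => χ1 μ ν a σ) (fun a b => χ2 μ ν a b σ)
              (fun _ _ _ => 0) (fun x => Γ ρ μ ν x * θ x ρ) σ)
            - pair (χ0 μ ν σ) (fun a => χ1 μ ν a σ) (fun a b => χ2 μ ν a b σ)
              (fun _ _ _ => 0) (pd μ (fun y => θ y ν)) σ := fun μ ν => by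
        rw [← pair_sum_field (hE1 μ ν)]
        exact pair_sub (ContDiff.sum fun ρ _ => hE1 μ ν ρ) (pd_smooth (hc ν) μ) _ _ _ _ _
      have hG : ∀ μ, pair (γ0 μ σ) (fun a => γ1 μ a σ) (fun a b => γ2 μ a b σ)
          (fun a b c => γ3 μ a b c σ) (Gfield F θ μ) σ
          = ∑ ρ, pair (γ0 μ σ) (fun a => γ1 μ a σ) (fun a b => γ2 μ a b σ)
          (fun a b c => γ3 μ a b c σ) (fun x => F ρ μ x * θ x ρ) σ := fun μ =>
        pair_sum_field (hG1 μ) _ _ _ _ _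
      rw [← Finset.sum_congr rfl fun ρ _ => component ρ _ (hc ρ) σ]
      simp only [hE, hG, Finset.sum_sub_distrib]
      congr 1
      · congr 1
        · rw [Finset.sum_comm_cycle]
        · rw [Finset.sum_comm]
      · rw [Finset.sum_comm]
    simp only [hLint]
    change _ - (∑ μ, ∫ σ, pair (γ0 μ σ) (fun a => γ1 μ a σ)
        (fun a b => γ2 μ a b σ) (fun a b c => γ3 μ a b c σ) (Gfield F θ μ) σ) = _
    have h1 : (∑ μ, ∑ ν, ∫ σ, pair (χ0 μ ν σ) (fun a => χ1 μ ν a σ)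
        (fun a b => χ2 μ ν a b σ) (fun _ _ _ => 0) (Efield Γ θ μ ν) σ)
        = ∫ σ, ∑ μ, ∑ ν, pair (χ0 μ ν σ) (fun a => χ1 μ ν a σ)
          (fun a b => χ2 μ ν a b σ) (fun _ _ _ => 0) (Efield Γ θ μ ν) σ := by
      rw [integral_finsetSum _ fun μ _ => integrable_finsetSum _ fun ν _ => iL μ ν]
      exact Finset.sum_congr rfl fun μ _ => (integral_finsetSum _ fun ν _ => iL μ ν).symm
    rw [h1, ← integral_finsetSum _ fun μ _ => iR μ,
      ← integral_sub (integrable_finsetSum _ fun μ _ => integrable_finsetSum _ fun ν _ => iL μ ν)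
        (integrable_finsetSum _ fun μ _ => iR μ)]
    simp only [hpt]
    refine (integral_finsetSum _ fun ρ _ => (iD ρ).sub (iW' ρ)).trans ?_
    refine Finset.sum_congr rfl fun ρ _ => ?_
    refine (integral_sub (iD ρ) (iW' ρ)).trans ?_
    rw [zW ρ, sub_zero]
  constructor
  · intro A
    have null : ∀ ρ, Null (D0 ρ) (D1 ρ) (D2 ρ) (fun a b c σ => 3 * D3 ρ a b c σ) := by
      intro ρ ψ h hs
      -- Test with the covector field whose only nonzero component is `θ_ρ = ψ`.
      have hθ : ContDiff ℝ (⊤ : ℕ∞) (fun x i => if i = ρ then ψ x else 0 :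
          (Fin 4 → ℝ) → Fin 4 → ℝ) := by
        refine contDiff_pi.2 fun i => ?_
        by_cases hi : i = ρ
        · simpa [hi] using h
        · simpa [hi] using contDiff_const
      have hθs : HasCompactSupport (fun x i => if i = ρ then ψ x else 0 :
          (Fin 4 → ℝ) → Fin 4 → ℝ) :=
        hs.comp_left (g := fun (t : ℝ) (i : Fin 4) => if i = ρ then t else 0)
          (by funext i; simp)
      have hk := key _ hθ hθs
      rw [sub_eq_zero.2 (A _ hθ hθs), Finset.sum_eq_single ρ] at hk
      · simpa using hk.symm
      · intro i _ hi
        simp [hi, pair_zero]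
      · simp
    have Z := fun ρ => (null ρ).coeff_eq_zero (cD0 ρ) (cD1 ρ) (cD2 ρ)
      (fun a b c => continuous_const.mul (cD3 ρ a b c)) (sD2 ρ)
      (fun a b c σ => by rw [sD3]) (fun a b c σ => by rw [sD3'])
    intro σ
    refine ⟨fun μ => ?_, fun μ a => ?_, fun μ a b => ?_, fun μ a b c => ?_⟩
    · rw [← sub_eq_zero, ← hD0]; exact (Z μ).1 σ
    · rw [← sub_eq_zero, ← hD1]; exact (Z μ).2.1 a σ
    · rw [← sub_eq_zero, ← hD2]; exact (Z μ).2.2.1 a b σ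
    · rw [← sub_eq_zero, ← hD3]
      simpa using (Z μ).2.2.2 a b c σ
  · intro B θ hθ hθs
    have z0 : ∀ ρ σ, D0 ρ σ = 0 := fun ρ σ => by rw [hD0, sub_eq_zero]; exact (B σ).1 ρ
    have z1 : ∀ ρ a σ, D1 ρ a σ = 0 := fun ρ a σ => by
      rw [hD1, sub_eq_zero]; exact (B σ).2.1 ρ a
    have z2 : ∀ ρ a b σ, D2 ρ a b σ = 0 := fun ρ a b σ => by
      rw [hD2, sub_eq_zero]; exact (B σ).2.2.1 ρ a b
    have z3 : ∀ ρ a b c σ, D3 ρ a b c σ = 0 := fun ρ a b c σ => by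
      rw [hD3, sub_eq_zero]; exact (B σ).2.2.2 ρ a b c
    rw [← sub_eq_zero, key θ hθ hθs]
    simp [z0, z1, z2, z3, pair]

end
end

section
/- Fix m ≠ 0, q ∈ ℝ, real constants Z^a and Z^{ab} = Z^{ba} (a,b ∈ {1,2,3}), and smooth functions Γ^ρ_{μν}, F^ρ_μ : ℝ⁴ → ℝ with m Γ^μ_{00}(x) = q F^μ_0(x) for all x ∈ ℝ⁴ and all μ. Define the constant components χ^{μν} := m δ^μ_0 δ^ν_0, χ^{μνa} := m δ^μ_0 δ^ν_0 Z^a, χ^{μνab} := m δ^μ_0 δ^ν_0 Z^{ab}, γ^{μ} := q δ^μ_0, γ^{μa} := q δ^μ_0 Z^a, γ^{μab} := q δ^μ_0 Z^{ab}, γ^{μabc} := 0. Then for every σ, with Γ, F and their derivatives evaluated at (σ,0,0,0), the charged quadrupole equations hold: (i) dχ^{μ0}/dσ + Σ Γ^μ_{νρ}χ^{ρν} − Σ χ^{ρνa}∂_aΓ^μ_{νρ} + ½ Σ χ^{ρνab}∂_b∂_aΓ^μ_{νρ} = Σ_ρ[ γ^{ρ}F^μ_ρ − Σ_a γ^{ρa}∂_aF^μ_ρ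 + ½ Σ_{a,b} γ^{ρab}∂_b∂_aF^μ_ρ ]; (ii) dχ^{μ0a}/dσ + χ^{μa} + Σ Γ^μ_{νρ}χ^{ρνa} − Σ (∂_bΓ^μ_{νρ})χ^{ρνba} = Σ_ρ[ γ^{ρa}F^μ_ρ − Σ_b γ^{ρab}∂_bF^μ_ρ ]; (iii) dχ^{μ0ab}/dσ + (χ^{μba} + χ^{μab}) + Σ Γ^μ_{νρ}χ^{ρνab} = Σ_ρ γ^{ρab}F^μ_ρ; (iv) the total symmetrization over a,b,c of χ^{μabc} := 0 equals (1/3)Σ_ρ γ^{ρabc}F^μ_ρ = 0. That is, the charged dust quadrupole and its current satisfy the charged quadrupole stress-energy equations. -/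
/-!
Every component of `χ` and `γ` is constant in `σ` and carries a factor `δ^μ₀` for each tensor index,
so the `σ`-derivatives vanish, each contraction collapses to its `ν = ρ = 0` term, and every component
with a spatial index in a tensor slot is zero. What survives in each equation is a combination of
`m Γ^μ₀₀` and its first and second partial derivatives on the left, and the same combination for
`q F^μ₀` on the right. These agree because the Lorentz condition holds on all of `ℝ⁴` and may
therefore be differentiated (`pd_const_mul`); the second equation also uses the symmetry of `Z^{ab}`.
-/

open MeasureTheory

noncomputable section

/-- Kronecker delta on `Fin 4`. -/
def kron (μ ν : Fin 4) : ℝ := if μ = ν then 1 else 0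

/-- No differentiability is needed: scalars of a field always pass through `fderiv`. -/
lemma pd_const_mul (c : ℝ) (μ : Fin 4) (ψ : (Fin 4 → ℝ) → ℝ) :
    pd μ (fun x => c * ψ x) = fun x => c * pd μ ψ x := by
  funext x
  have h : fderiv ℝ (c • ψ) x = c • fderiv ℝ ψ x :=
    congrFun (fderiv_const_smul_field c) x
  exact congrArg (fun L => L (e4 μ)) h

lemma kron_self (μ : Fin 4) : kron μ μ = 1 := if_pos rfl

lemma kron_sp (a : Fin 3) : kron (sp a) 0 = 0 := if_neg (Fin.succ_ne_zero a)

/-- The charged dust quadrupole `χ^{μν} = m δ^μ₀δ^ν₀`, `χ^{μνa} = m δ^μ₀δ^ν₀ Z^a`,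
`χ^{μνab} = m δ^μ₀δ^ν₀ Z^{ab}` and current `γ^μ = q δ^μ₀`, `γ^{μa} = q δ^μ₀ Z^a`,
`γ^{μab} = q δ^μ₀ Z^{ab}`, `γ^{μabc} = 0` satisfy the charged quadrupole equations
in coordinates adapted to the Lorentz force congruence (`m Γ^μ₀₀ = q F^μ₀`). -/
theorem charged_dust_quadrupole_satisfies_equations
    (m q : ℝ) (hm : m ≠ 0)
    (Z1 : Fin 3 → ℝ) (Z2 : Fin 3 → Fin 3 → ℝ)
    (hZ2sym : ∀ a b, Z2 a b = Z2 b a)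
    (Γ : Fin 4 → Fin 4 → Fin 4 → (Fin 4 → ℝ) → ℝ)
    (hΓs : ∀ ρ μ ν, ContDiff ℝ (⊤ : ℕ∞) (Γ ρ μ ν))
    (F : Fin 4 → Fin 4 → (Fin 4 → ℝ) → ℝ)
    (hFs : ∀ ρ μ, ContDiff ℝ (⊤ : ℕ∞) (F ρ μ))
    (hLorentz : ∀ μ x, m * Γ μ 0 0 x = q * F μ 0 x)
    (χ0 : Fin 4 → Fin 4 → ℝ → ℝ)
    (χ1 : Fin 4 → Fin 4 → Fin 3 → ℝ → ℝ)
    (χ2 : Fin 4 → Fin 4 → Fin 3 → Fin 3 → ℝ → ℝ)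
    (γ0 : Fin 4 → ℝ → ℝ)
    (γ1 : Fin 4 → Fin 3 → ℝ → ℝ)
    (γ2 : Fin 4 → Fin 3 → Fin 3 → ℝ → ℝ)
    (γ3 : Fin 4 → Fin 3 → Fin 3 → Fin 3 → ℝ → ℝ)
    (hχ0 : ∀ μ ν σ, χ0 μ ν σ = m * kron μ 0 * kron ν 0)
    (hχ1 : ∀ μ ν a σ, χ1 μ ν a σ = m * kron μ 0 * kron ν 0 * Z1 a)
    (hχ2 : ∀ μ ν a b σ, χ2 μ ν a b σ = m * kron μ 0 * kron ν 0 * Z2 a b)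
    (hγ0 : ∀ μ σ, γ0 μ σ = q * kron μ 0)
    (hγ1 : ∀ μ a σ, γ1 μ a σ = q * kron μ 0 * Z1 a)
    (hγ2 : ∀ μ a b σ, γ2 μ a b σ = q * kron μ 0 * Z2 a b)
    (hγ3 : ∀ μ a b c σ, γ3 μ a b c σ = 0) :
    ∀ σ : ℝ,
      (∀ μ, deriv (χ0 μ 0) σ
          + (∑ ν : Fin 4, ∑ ρ : Fin 4, Γ μ ν ρ (pt σ) * χ0 ρ ν σ)
          - (∑ ν : Fin 4, ∑ ρ : Fin 4, ∑ a : Fin 3,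
              χ1 ρ ν a σ * pd (sp a) (Γ μ ν ρ) (pt σ))
          + (1/2) * ∑ ν : Fin 4, ∑ ρ : Fin 4, ∑ a : Fin 3, ∑ b : Fin 3,
              χ2 ρ ν a b σ * pd (sp b) (pd (sp a) (Γ μ ν ρ)) (pt σ)
        = ∑ ρ : Fin 4,
            (γ0 ρ σ * F μ ρ (pt σ)
              - ∑ a : Fin 3, γ1 ρ a σ * pd (sp a) (F μ ρ) (pt σ)
              + (1/2) * ∑ a : Fin 3, ∑ b : Fin 3,
                  γ2 ρ a b σ * pd (sp b) (pd (sp a) (F μ ρ)) (pt σ))) ∧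
      (∀ μ a, deriv (fun s => χ1 μ 0 a s) σ
          + χ0 μ (sp a) σ
          + (∑ ν : Fin 4, ∑ ρ : Fin 4, Γ μ ν ρ (pt σ) * χ1 ρ ν a σ)
          - (∑ ν : Fin 4, ∑ ρ : Fin 4, ∑ b : Fin 3,
              pd (sp b) (Γ μ ν ρ) (pt σ) * χ2 ρ ν b a σ)
        = ∑ ρ : Fin 4,
            (γ1 ρ a σ * F μ ρ (pt σ)
              - ∑ b : Fin 3, γ2 ρ a b σ * pd (sp b) (F μ ρ) (pt σ))) ∧
      (∀ μ a b, deriv (fun s => χ2 μ 0 a b s) σ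
          + (χ1 μ (sp b) a σ + χ1 μ (sp a) b σ)
          + (∑ ν : Fin 4, ∑ ρ : Fin 4, Γ μ ν ρ (pt σ) * χ2 ρ ν a b σ)
        = ∑ ρ : Fin 4, γ2 ρ a b σ * F μ ρ (pt σ)) ∧
      (∀ μ a b c,
          (1/6) * (χ2 μ (sp a) b c σ + χ2 μ (sp a) c b σ + χ2 μ (sp b) a c σ +
            χ2 μ (sp b) c a σ + χ2 μ (sp c) a b σ + χ2 μ (sp c) b a σ)
        = (1/3) * ∑ ρ : Fin 4, γ3 ρ a b c σ * F μ ρ (pt σ)) := by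
  intro σ
  -- The Lorentz condition, solved for the only connection components that survive.
  have hΓ : ∀ μ, Γ μ 0 0 = fun x => (q / m) * F μ 0 x := by
    intro μ
    funext x
    field_simp
    linarith [hLorentz μ x]
  have k1 : kron 1 0 = 0 := kron_sp 0
  have k2 : kron 2 0 = 0 := kron_sp 1
  have k3 : kron 3 0 = 0 := kron_sp 2
  have d0 : ∀ μ, deriv (χ0 μ 0) σ = 0 := by
    intro μ
    rw [show χ0 μ 0 = fun _ => m * kron μ 0 * kron 0 0 from funext (hχ0 μ 0)]
    exact deriv_const _ _
  simp only [d0, hχ0, hχ1, hχ2, hγ0, hγ1, hγ2, hγ3, deriv_const, kron_sp, kron_self,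
    Fin.sum_univ_four, k1, k2, k3, mul_zero, zero_mul, mul_one, add_zero, zero_add,
    Finset.sum_const_zero, hΓ, pd_const_mul, sub_zero]
  refine ⟨fun μ => ?_, fun μ a => ?_, fun μ a b => ?_, fun _ _ _ _ => trivial⟩
  · simp only [Fin.sum_univ_three]
    field_simp
  · simp only [Fin.sum_univ_three, hZ2sym a]
    field_simp
  · field_simp

end
end
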